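/- Let Λ be a full-rank lattice in ℝⁿ with covolume covol(Λ) and Fourier dual lattice Λ̂ = {t ∈ ℝⁿ : ⟨t, λ⟩ ∈ 2πℤ for all λ ∈ Λ}. Let f : ℝⁿ → ℝ be a continuous, nonnegative, integrable probability density satisfying a decay bound f(x) ≤ C(1+‖x‖)^{−(n+δ)} for some C, δ > 0, with characteristic function ψ(t) = ∫_{ℝⁿ} f(x) e^{i⟨t,x⟩} dx. If ψ(t) = 0 for all t outside the interior of the Voronoi region V(Λ̂) of Λ̂, then for every x ∈ ℝⁿ, Σ_{λ∈Λ} f(λ + x) = 1/covol(Λ). In particular, for each x the function u ↦ covol(Λ)·f(u) restricted to the coset Λ + x is a probability mass function. -/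

import Mathlib

open scoped RealInnerProductSpace
open MeasureTheory

noncomputable section

/-- The characteristic function `ψ(t) = ∫_{ℝⁿ} f(x)·e^{i⟨t,x⟩} dx` of a density `f` on `ℝⁿ`. -/
def charFn {n : ℕ} (f : EuclideanSpace ℝ (Fin n) → ℝ) (t : EuclideanSpace ℝ (Fin n)) : ℂ :=
  ∫ x : EuclideanSpace ℝ (Fin n), (f x : ℂ) * Complex.exp ((⟪t, x⟫ : ℂ) * Complex.I)

/-- The Fourier dual lattice `Λ̂ = {t : ⟨t, λ⟩ ∈ 2πℤ for all λ ∈ Λ}`. -/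
def fourierDual {n : ℕ} (Λ : Set (EuclideanSpace ℝ (Fin n))) : Set (EuclideanSpace ℝ (Fin n)) :=
  {t | ∀ l ∈ Λ, ∃ k : ℤ, ⟪t, l⟫ = 2 * Real.pi * k}

/-- The (closed) Voronoi region `V(L) = {x : ‖x‖ ≤ ‖x − μ‖ for all μ ∈ L}` of `L ⊆ ℝⁿ`. -/
def voronoi {n : ℕ} (L : Set (EuclideanSpace ℝ (Fin n))) : Set (EuclideanSpace ℝ (Fin n)) :=
  {x | ∀ μ ∈ L, ‖x‖ ≤ ‖x - μ‖}

/-!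
The periodization `F x = ∑_{l ∈ Λ} f (l + x)` is a continuous function on the torus `E / Λ`.
Unfolding the sum over a fundamental domain, the Fourier coefficients of `F` are, up to the factor
`1 / covol Λ`, the values of the characteristic function `ψ` at the points of the Fourier dual. The
origin is the only dual point in the Voronoi region of the dual, so all these values vanish except
`ψ 0 = ∫ f`. The Fourier series of `F` is then summable, hence converges to `F` everywhere, and `F`
is the constant `(∫ f) / covol Λ`.
-/

section TorusCoordinates

open Module

variable {ι E : Type*} [AddCommGroup E] [Module ℝ E]

/-- The map `x ↦ (xᵢ mod 1)ᵢ`, where `xᵢ` are the coordinates of `x` in the real basis `B`. It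
identifies the quotient of `E` by the lattice spanned by `B` with the unit torus. -/
def torusCoord (B : Basis ι ℝ E) (x : E) : UnitAddTorus ι := fun i ↦ (B.repr x i : UnitAddCircle)

lemma sub_mem_span_of_torusCoord_eq (B : Basis ι ℝ E) {x y : E}
    (h : torusCoord B x = torusCoord B y) : x - y ∈ Submodule.span ℤ (Set.range B) := by
  refine (B.mem_span_iff_repr_mem ℤ _).mpr fun i ↦ ?_
  obtain ⟨k, hk⟩ := QuotientAddGroup.eq_iff_sub_mem.mp (congrFun h i)
  exact ⟨k, by simpa using hk⟩

lemma torusCoord_eq_zero_of_mem_span (B : Basis ι ℝ E) {l : E}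
    (hl : l ∈ Submodule.span ℤ (Set.range B)) : torusCoord B l = 0 := by
  funext i
  obtain ⟨k, hk⟩ := (B.mem_span_iff_repr_mem ℤ l).mp hl i
  exact (QuotientAddGroup.eq_zero_iff _).mpr ⟨k, by simpa using hk⟩

variable [Finite ι]

lemma repr_equivFun_symm (B : Basis ι ℝ E) (y : ι → ℝ) (i : ι) :
    B.repr (B.equivFun.symm y) i = y i :=
  congrFun (B.equivFun.apply_symm_apply y) i

lemma torusCoord_equivFun_symm (B : Basis ι ℝ E) (y : ι → ℝ) :
    torusCoord B (B.equivFun.symm y) = fun i ↦ (y i : UnitAddCircle) := by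
  funext i
  rw [torusCoord, repr_equivFun_symm]

end TorusCoordinates

section TorusFourier

open Module

variable {ι E : Type*} [NormedAddCommGroup E] [NormedSpace ℝ E]

lemma equivFun_symm_preimage_fundamentalDomain [Finite ι] (B : Basis ι ℝ E) :
    B.equivFun.symm ⁻¹' ZSpan.fundamentalDomain B = Set.univ.pi fun _ ↦ Set.Ico 0 1 := by
  ext y
  simp only [Set.mem_preimage, ZSpan.mem_fundamentalDomain, Set.mem_univ_pi, repr_equivFun_symm]

lemma isOpenQuotientMap_torusCoord [Finite ι] (B : Basis ι ℝ E) :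
    IsOpenQuotientMap (torusCoord B) :=
  have : FiniteDimensional ℝ E := B.finiteDimensional_of_finite
  (IsOpenQuotientMap.piMap fun _ : ι ↦ QuotientAddGroup.isOpenQuotientMap_mk).comp
    B.equivFun.toContinuousLinearEquiv.toHomeomorph.isOpenQuotientMap

variable [Fintype ι]

/-- The functional `x ↦ 2π ∑ mᵢ xᵢ` in the coordinates of the basis `B`: the phase of the Fourier
monomial of index `m` on the torus. As `m` varies, these functionals run through the Fourier dual of
the lattice spanned by `B`. -/
def fourierPhase (B : Basis ι ℝ E) (m : ι → ℤ) : StrongDual ℝ E :=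
  have : FiniteDimensional ℝ E := B.finiteDimensional_of_finite
  LinearMap.toContinuousLinearMap (B.constr ℝ fun i ↦ 2 * Real.pi * (m i : ℝ))

lemma fourierPhase_apply (B : Basis ι ℝ E) (m : ι → ℤ) (x : E) :
    fourierPhase B m x = ∑ i, B.repr x i * (2 * Real.pi * m i) := by
  simp [fourierPhase, Basis.constr_apply_fintype]

lemma fourierPhase_ne_zero (B : Basis ι ℝ E) {m : ι → ℤ} (hm : m ≠ 0) : fourierPhase B m ≠ 0 := by
  classical
  obtain ⟨i, hi⟩ := Function.ne_iff.mp hm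
  refine fun h ↦ hi ?_
  simpa [fourierPhase_apply, Finsupp.single_apply, Real.pi_ne_zero] using DFunLike.congr_fun h (B i)

lemma mFourier_torusCoord (B : Basis ι ℝ E) (m : ι → ℤ) (x : E) :
    UnitAddTorus.mFourier m (torusCoord B x) = Complex.exp (fourierPhase B m x * Complex.I) := by
  simp only [UnitAddTorus.mFourier, ContinuousMap.coe_mk, torusCoord, fourier_coe_apply,
    ← Complex.exp_sum, fourierPhase_apply, Complex.ofReal_sum, Finset.sum_mul]
  congr 1
  refine Finset.sum_congr rfl fun i _ ↦ ?_
  push_cast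
  ring

lemma exp_fourierPhase_eq_one (B : Basis ι ℝ E) (m : ι → ℤ) {l : E}
    (hl : l ∈ Submodule.span ℤ (Set.range B)) :
    Complex.exp (fourierPhase B m l * Complex.I) = 1 := by
  rw [← mFourier_torusCoord, torusCoord_eq_zero_of_mem_span B hl]
  simp [UnitAddTorus.mFourier]

variable [MeasurableSpace E] [BorelSpace E] (μ : Measure E) [μ.IsAddHaarMeasure]

lemma map_equivFun_symm_volume (B : Basis ι ℝ E) :
    Measure.map B.equivFun.symm volume = (μ (ZSpan.fundamentalDomain B))⁻¹ • μ := by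
  have : FiniteDimensional ℝ E := B.finiteDimensional_of_finite
  let φ : (ι → ℝ) ≃L[ℝ] E := B.equivFun.symm.toContinuousLinearEquiv
  have : (Measure.map φ volume).IsAddHaarMeasure := φ.isAddHaarMeasure_map volume
  have hsmul := Measure.isAddLeftInvariant_eq_smul (Measure.map φ volume) μ
  have hone : Measure.map φ volume (ZSpan.fundamentalDomain B) = 1 := by
    calc Measure.map φ volume (ZSpan.fundamentalDomain B)
        = volume (B.equivFun.symm ⁻¹' ZSpan.fundamentalDomain B) :=
          φ.toHomeomorph.measurableEmbedding.map_apply _ _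
      _ = 1 := by simp [equivFun_symm_preimage_fundamentalDomain, Real.volume_pi_Ico]
  rw [hsmul, Measure.smul_apply] at hone
  change Measure.map φ volume = _
  rw [hsmul, ← ENNReal.eq_inv_of_mul_eq_one_left hone]
  rfl

lemma setAverage_fundamentalDomain_eq_integral_cube {F : Type*} [NormedAddCommGroup F]
    [NormedSpace ℝ F] (B : Basis ι ℝ E) (h : E → F) :
    ⨍ x in ZSpan.fundamentalDomain B, h x ∂μ =
      ∫ y in {y : ι → ℝ | ∀ i, y i ∈ Set.Ioc 0 1}, h (B.equivFun.symm y) := by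
  have : FiniteDimensional ℝ E := B.finiteDimensional_of_finite
  have hcube : {y : ι → ℝ | ∀ i, y i ∈ Set.Ioc 0 1} =ᵐ[volume]
      B.equivFun.symm ⁻¹' ZSpan.fundamentalDomain B := by
    rw [equivFun_symm_preimage_fundamentalDomain,
      show {y : ι → ℝ | ∀ i, y i ∈ Set.Ioc 0 1} = Set.univ.pi fun _ ↦ Set.Ioc 0 1 by ext; simp]
    exact Measure.univ_pi_Ioc_ae_eq_Icc.trans Measure.univ_pi_Ico_ae_eq_Icc.symm
  have hemb : MeasurableEmbedding B.equivFun.symm :=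
    B.equivFun.symm.toContinuousLinearEquiv.toHomeomorph.measurableEmbedding
  rw [setIntegral_congr_set hcube, ← hemb.setIntegral_map, map_equivFun_symm_volume μ,
    Measure.restrict_smul, integral_smul_measure, setAverage_eq, ENNReal.toReal_inv]
  rfl

lemma mFourierCoeff_eq_setAverage {F : Type*} [NormedAddCommGroup F] [NormedSpace ℂ F]
    (B : Basis ι ℝ E) (G : UnitAddTorus ι → F) (m : ι → ℤ) :
    UnitAddTorus.mFourierCoeff G m = ⨍ x in ZSpan.fundamentalDomain B,
      Complex.exp (fourierPhase B (-m) x * Complex.I) • G (torusCoord B x) ∂μ := by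
  simp only [setAverage_fundamentalDomain_eq_integral_cube, ← mFourier_torusCoord,
    torusCoord_equivFun_symm, UnitAddTorus.mFourierCoeff_eq_integral G m 0, Pi.zero_apply,
    zero_add]

end TorusFourier

section FourierUniqueness

open Module

lemma eq_mFourierCoeff_zero {ι : Type*} [Fintype ι] (G : C(UnitAddTorus ι, ℂ))
    (hG : ∀ m ≠ 0, UnitAddTorus.mFourierCoeff G m = 0) (z : UnitAddTorus ι) :
    G z = UnitAddTorus.mFourierCoeff G 0 := by
  have hsum : HasSum (UnitAddTorus.mFourierCoeff G) (UnitAddTorus.mFourierCoeff G 0) :=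
    hasSum_single 0 hG
  have hseries := UnitAddTorus.hasSum_mFourier_series_apply_of_summable hsum.summable z
  rw [hseries.unique (hasSum_single 0 fun m hm ↦ by rw [hG m hm, zero_smul])]
  simp [UnitAddTorus.mFourier_zero]

variable {ι E : Type*} [Fintype ι] [NormedAddCommGroup E] [NormedSpace ℝ E] [MeasurableSpace E]
  [BorelSpace E]

lemma eq_setAverage_of_periodic_of_integral_fourierPhase_eq_zero (μ : Measure E)
    [μ.IsAddHaarMeasure] (B : Basis ι ℝ E) {g : E → ℂ} (hg : Continuous g)
    (hper : ∀ l ∈ Submodule.span ℤ (Set.range B), ∀ x, g (l + x) = g x)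
    (hzero : ∀ m ≠ 0, ∫ x in ZSpan.fundamentalDomain B,
      g x * Complex.exp (fourierPhase B m x * Complex.I) ∂μ = 0) (x : E) :
    g x = ⨍ y in ZSpan.fundamentalDomain B, g y ∂μ := by
  have hq := isOpenQuotientMap_torusCoord B
  have hfactors : Function.FactorsThrough g (torusCoord B) := fun y y' h ↦ by
    simpa using hper _ (sub_mem_span_of_torusCoord_eq B h) y'
  let G : C(UnitAddTorus ι, ℂ) :=
    Topology.IsQuotientMap.lift (f := ⟨torusCoord B, hq.continuous⟩) hq.isQuotientMap ⟨g, hg⟩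
      hfactors
  have hGg : ∀ y, G (torusCoord B y) = g y := fun y ↦
    DFunLike.congr_fun (Topology.IsQuotientMap.lift_comp (f := ⟨torusCoord B, hq.continuous⟩)
      hq.isQuotientMap ⟨g, hg⟩ hfactors) y
  have hcoeff (m : ι → ℤ) : UnitAddTorus.mFourierCoeff G m = ⨍ y in ZSpan.fundamentalDomain B,
      g y * Complex.exp (fourierPhase B (-m) y * Complex.I) ∂μ := by
    simp only [mFourierCoeff_eq_setAverage μ B, hGg, smul_eq_mul, mul_comm]
  have hvanish (m) (hm : m ≠ 0) : UnitAddTorus.mFourierCoeff G m = 0 := by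
    rw [hcoeff, setAverage_eq, hzero (-m) (neg_ne_zero.mpr hm), smul_zero]
  rw [← hGg, eq_mFourierCoeff_zero G hvanish, hcoeff]
  simp [fourierPhase_apply]

end FourierUniqueness

section Periodization

variable {E F : Type*} [NormedAddCommGroup E] [NormedAddCommGroup F]

/-- The sum `x ↦ ∑_{l ∈ Λ} f (l + x)` of the translates of `f` by the points of `Λ`; it is `0` at
the points where this sum diverges. -/
def periodization (Λ : Submodule ℤ E) (f : E → F) (x : E) : F := ∑' l : Λ, f (l + x)

lemma periodization_add_left (Λ : Submodule ℤ E) (f : E → F) {l : E} (hl : l ∈ Λ) (x : E) :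
    periodization Λ f (l + x) = periodization Λ f x := by
  simp only [periodization, ← (Equiv.addRight (⟨l, hl⟩ : Λ)).tsum_eq fun k : Λ ↦ f (k + x)]
  simp [add_assoc]

lemma setIntegral_periodization [MeasurableSpace E] [BorelSpace E] [NormedSpace ℝ F]
    {μ : Measure E} [μ.IsAddLeftInvariant] {Λ : Submodule ℤ E} [Countable Λ] {D : Set E}
    (hD : IsAddFundamentalDomain Λ D μ) {f : E → F} (hf : Integrable f μ) :
    ∫ x in D, periodization Λ f x ∂μ = ∫ x, f x ∂μ := by
  have : MeasurableConstVAdd Λ E := inferInstanceAs (MeasurableConstVAdd Λ.toAddSubgroup E)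
  have : VAddInvariantMeasure Λ E μ := inferInstanceAs (VAddInvariantMeasure Λ.toAddSubgroup E μ)
  rw [hD.integral_eq_tsum'' f hf]
  refine integral_tsum (fun l ↦ (hf.comp_add_left (l : E)).1.restrict) ?_
  exact (hD.lintegral_eq_tsum'' fun x ↦ ‖f x‖ₑ).symm.trans_ne hf.2.ne

lemma setIntegral_periodization_mul {𝕜 : Type*} [RCLike 𝕜] [MeasurableSpace E] [BorelSpace E]
    {μ : Measure E} [μ.IsAddLeftInvariant] {Λ : Submodule ℤ E} [Countable Λ] {D : Set E}
    (hD : IsAddFundamentalDomain Λ D μ) {f χ : E → 𝕜} (hf : Integrable (fun x ↦ f x * χ x) μ)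
    (hχ : ∀ l ∈ Λ, ∀ x, χ (l + x) = χ x) :
    ∫ x in D, periodization Λ f x * χ x ∂μ = ∫ x, f x * χ x ∂μ := by
  rw [← setIntegral_periodization hD hf]
  simp only [periodization, fun (l : Λ) x ↦ hχ l l.2 x, tsum_mul_right]

lemma setIntegral_periodization_mul_exp [MeasurableSpace E] [BorelSpace E] [NormedSpace ℝ E]
    {μ : Measure E} [μ.IsAddLeftInvariant] {Λ : Submodule ℤ E} [Countable Λ] {D : Set E}
    (hD : IsAddFundamentalDomain Λ D μ) {f : E → ℂ} (hf : Integrable f μ) {L : StrongDual ℝ E}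
    (hL : ∀ l ∈ Λ, Complex.exp (L l * Complex.I) = 1) :
    ∫ x in D, periodization Λ f x * Complex.exp (L x * Complex.I) ∂μ =
      ∫ x, f x * Complex.exp (L x * Complex.I) ∂μ := by
  refine setIntegral_periodization_mul hD (hf.mul_bdd (c := 1) ?_ ?_) fun l hl x ↦ ?_
  · exact (by fun_prop : Continuous fun x ↦ Complex.exp (L x * Complex.I)).aestronglyMeasurable
  · exact .of_forall fun x ↦ (Complex.norm_exp_ofReal_mul_I _).le
  · rw [map_add, Complex.ofReal_add, add_mul, Complex.exp_add, hL l hl, one_mul]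

end Periodization

section PolynomialDecay

open Module

variable {E F : Type*} [NormedAddCommGroup E] [NormedAddCommGroup F]

/-- Peetre's inequality. -/
lemma one_add_norm_add_rpow_neg_le {r : ℝ} (hr : 0 ≤ r) (x y : E) :
    (1 + ‖x + y‖) ^ (-r) ≤ (1 + ‖y‖) ^ r * (1 + ‖x‖) ^ (-r) := by
  have hmul : 1 + ‖x‖ ≤ (1 + ‖y‖) * (1 + ‖x + y‖) := by
    have : ‖x‖ ≤ ‖x + y‖ + ‖y‖ := by simpa using norm_sub_le (x + y) y
    nlinarith [norm_nonneg (x + y), norm_nonneg y]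
  calc (1 + ‖x + y‖) ^ (-r)
      = (1 + ‖y‖) ^ r * ((1 + ‖y‖) * (1 + ‖x + y‖)) ^ (-r) := by
        rw [Real.mul_rpow (by positivity) (by positivity), ← mul_assoc,
          ← Real.rpow_add (by positivity), add_neg_cancel, Real.rpow_zero, one_mul]
    _ ≤ (1 + ‖y‖) ^ r * (1 + ‖x‖) ^ (-r) := by
        exact mul_le_mul_of_nonneg_left
          (Real.rpow_le_rpow_of_nonpos (by positivity) hmul (neg_nonpos.mpr hr)) (by positivity)

lemma norm_add_le_of_decay {f : E → F} {C r : ℝ} (hr : 0 ≤ r)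
    (hf : ∀ x, ‖f x‖ ≤ C * (1 + ‖x‖) ^ (-r)) {x y : E} {R : ℝ} (hy : ‖y‖ ≤ R) :
    ‖f (x + y)‖ ≤ C * (1 + R) ^ r * (1 + ‖x‖) ^ (-r) := by
  have hC : 0 ≤ C := by simpa using (norm_nonneg _).trans (hf 0)
  calc ‖f (x + y)‖ ≤ C * (1 + ‖x + y‖) ^ (-r) := hf _
    _ ≤ C * ((1 + ‖y‖) ^ r * (1 + ‖x‖) ^ (-r)) := by
      gcongr
      exact one_add_norm_add_rpow_neg_le hr x y
    _ ≤ C * (1 + R) ^ r * (1 + ‖x‖) ^ (-r) := by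
      rw [← mul_assoc]
      gcongr

variable [NormedSpace ℝ E] [FiniteDimensional ℝ E]

lemma integrable_of_decay [MeasurableSpace E] [BorelSpace E] {μ : Measure E} [μ.IsAddHaarMeasure]
    {f : E → F} (hf : AEStronglyMeasurable f μ) {C r : ℝ} (hr : finrank ℝ E < r)
    (hdecay : ∀ x, ‖f x‖ ≤ C * (1 + ‖x‖) ^ (-r)) : Integrable f μ :=
  ((integrable_one_add_norm hr).const_mul C).mono' hf (.of_forall hdecay)

variable {Λ : Submodule ℤ E} [DiscreteTopology Λ]

lemma summable_one_add_norm_rpow_neg {r : ℝ} (hr : finrank ℤ Λ < r) :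
    Summable fun l : Λ ↦ (1 + ‖(l : E)‖) ^ (-r) := by
  have hr₀ : 0 ≤ r := (Nat.cast_nonneg _).trans hr.le
  refine (ZLattice.summable_norm_rpow Λ (-r) (neg_lt_neg hr)).of_norm_bounded_eventually ?_
  filter_upwards [(Set.finite_singleton (0 : Λ)).compl_mem_cofinite] with l hl
  have hl₀ : 0 < ‖l‖ := norm_pos_iff.mpr hl
  rw [Real.norm_of_nonneg (by positivity)]
  exact Real.rpow_le_rpow_of_nonpos hl₀ (by simp) (neg_nonpos.mpr hr₀)

variable [CompleteSpace F] {f : E → F} {C r : ℝ}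

lemma summable_translates_of_decay (hr : finrank ℤ Λ < r)
    (hdecay : ∀ x, ‖f x‖ ≤ C * (1 + ‖x‖) ^ (-r)) (x : E) : Summable fun l : Λ ↦ f (l + x) :=
  ((summable_one_add_norm_rpow_neg hr).mul_left (C * (1 + ‖x‖) ^ r)).of_norm_bounded
    fun _ ↦ norm_add_le_of_decay ((Nat.cast_nonneg _).trans hr.le) hdecay le_rfl

lemma continuous_periodization_of_decay (hr : finrank ℤ Λ < r)
    (hdecay : ∀ x, ‖f x‖ ≤ C * (1 + ‖x‖) ^ (-r)) (hf : Continuous f) :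
    Continuous (periodization Λ f) := by
  refine continuous_iff_continuousAt.mpr fun x₀ ↦ ?_
  have hball : ContinuousOn (periodization Λ f) (Metric.ball 0 (‖x₀‖ + 1)) :=
    continuousOn_tsum (fun l ↦ by fun_prop)
      ((summable_one_add_norm_rpow_neg hr).mul_left (C * (1 + (‖x₀‖ + 1)) ^ r))
      fun l x hx ↦ norm_add_le_of_decay ((Nat.cast_nonneg _).trans hr.le) hdecay
        (mem_ball_zero_iff.mp hx).le
  exact hball.continuousAt (Metric.isOpen_ball.mem_nhds (by simp))

end PolynomialDecay

theorem stmt_14_general {E : Type*} [NormedAddCommGroup E] [NormedSpace ℝ E]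
    [FiniteDimensional ℝ E] [MeasurableSpace E] [BorelSpace E] (μ : Measure E)
    [μ.IsAddHaarMeasure] (Λ : Submodule ℤ E) [DiscreteTopology Λ] [IsZLattice ℝ Λ] {f : E → ℂ}
    (hf : Continuous f) {C r : ℝ} (hr : Module.finrank ℝ E < r)
    (hdecay : ∀ x, ‖f x‖ ≤ C * (1 + ‖x‖) ^ (-r))
    (hdual : ∀ L : StrongDual ℝ E, L ≠ 0 → (∀ l ∈ Λ, Complex.exp (L l * Complex.I) = 1) →
      ∫ x, f x * Complex.exp (L x * Complex.I) ∂μ = 0) (x : E) :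
    HasSum (fun l : Λ ↦ f (l + x)) ((∫ y, f y ∂μ) / ZLattice.covolume Λ μ) := by
  have := ZLattice.module_free ℝ Λ
  have := ZLattice.module_finite ℝ Λ
  let b := Module.Free.chooseBasis ℤ Λ
  let B := b.ofZLatticeBasis ℝ
  have hspan : Submodule.span ℤ (Set.range B) = Λ := b.ofZLatticeBasis_span ℝ
  have hD : IsAddFundamentalDomain Λ (ZSpan.fundamentalDomain B) μ :=
    ZLattice.isAddFundamentalDomain b μ
  have hfint : Integrable f μ := integrable_of_decay hf.aestronglyMeasurable hr hdecay
  have hrΛ : Module.finrank ℤ Λ < r := by rwa [ZLattice.rank ℝ Λ]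
  have hzero (m) (hm : m ≠ 0) : ∫ y in ZSpan.fundamentalDomain B,
      periodization Λ f y * Complex.exp (fourierPhase B m y * Complex.I) ∂μ = 0 := by
    have hone : ∀ l ∈ Λ, Complex.exp (fourierPhase B m l * Complex.I) = 1 := fun l hl ↦
      exp_fourierPhase_eq_one B m (hspan.ge hl)
    rw [setIntegral_periodization_mul_exp hD hfint hone]
    exact hdual _ (fourierPhase_ne_zero B hm) hone
  have hmean : periodization Λ f x = (∫ y, f y ∂μ) / ZLattice.covolume Λ μ := by
    rw [eq_setAverage_of_periodic_of_integral_fourierPhase_eq_zero μ B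
        (continuous_periodization_of_decay hrΛ hdecay hf)
        (fun l hl ↦ periodization_add_left Λ f (hspan.le hl)) hzero x,
      setAverage_eq, setIntegral_periodization hD hfint,
      ZLattice.covolume_eq_measure_fundamentalDomain Λ μ hD, Complex.real_smul, Complex.ofReal_inv,
      div_eq_inv_mul]
  exact hmean ▸ (summable_translates_of_decay hrΛ hdecay x).hasSum

section EuclideanSpace

variable {n : ℕ} {Λ : Set (EuclideanSpace ℝ (Fin n))}

lemma eq_zero_of_mem_of_mem_voronoi {L : Set (EuclideanSpace ℝ (Fin n))}
    {t : EuclideanSpace ℝ (Fin n)} (ht : t ∈ L) (htV : t ∈ voronoi L) : t = 0 := by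
  simpa using htV t ht

lemma toDual_symm_mem_fourierDual {L : StrongDual ℝ (EuclideanSpace ℝ (Fin n))}
    (hL : ∀ l ∈ Λ, Complex.exp (L l * Complex.I) = 1) :
    (InnerProductSpace.toDual ℝ _).symm L ∈ fourierDual Λ := fun l hl ↦ by
  obtain ⟨k, hk⟩ := Complex.exp_eq_one_iff.mp (hL l hl)
  refine ⟨k, ?_⟩
  have : (L l : ℂ) = 2 * Real.pi * k :=
    mul_right_cancel₀ Complex.I_ne_zero (by linear_combination hk)
  rw [InnerProductSpace.toDual_symm_apply]
  exact_mod_cast this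

lemma charFn_toDual_symm (f : EuclideanSpace ℝ (Fin n) → ℝ)
    (L : StrongDual ℝ (EuclideanSpace ℝ (Fin n))) :
    charFn f ((InnerProductSpace.toDual ℝ _).symm L) =
      ∫ x, (f x : ℂ) * Complex.exp (L x * Complex.I) := by
  simp only [charFn, InnerProductSpace.toDual_symm_apply]

lemma integral_mul_exp_eq_zero_of_charFn_eq_zero {f : EuclideanSpace ℝ (Fin n) → ℝ}
    (hf : ∀ t ∉ interior (voronoi (fourierDual Λ)), charFn f t = 0)
    {L : StrongDual ℝ (EuclideanSpace ℝ (Fin n))} (hL₀ : L ≠ 0)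
    (hL : ∀ l ∈ Λ, Complex.exp (L l * Complex.I) = 1) :
    ∫ x, (f x : ℂ) * Complex.exp (L x * Complex.I) = 0 := by
  rw [← charFn_toDual_symm]
  refine hf _ fun hmem ↦ hL₀ ?_
  simpa using eq_zero_of_mem_of_mem_voronoi (toDual_symm_mem_fourierDual hL)
    (interior_subset hmem)

end EuclideanSpace

/-- Let `Λ` be a full-rank lattice in `ℝⁿ` with covolume `covol(Λ)` and
Fourier dual lattice `Λ̂`. Let `f : ℝⁿ → ℝ` be a continuous, nonnegative, integrable
probability density satisfying a decay bound `f(x) ≤ C(1+‖x‖)^{−(n+δ)}` for some `C, δ > 0`,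
with characteristic function `ψ`. If `ψ(t) = 0` for all `t` outside the interior of the
Voronoi region of `Λ̂`, then for every `x ∈ ℝⁿ`, `Σ_{λ∈Λ} f(λ + x) = 1/covol(Λ)`; in
particular, for each `x` the function `u ↦ covol(Λ)·f(u)` restricted to the coset `Λ + x` is a
probability mass function. -/
theorem stmt_14 {n : ℕ} (Λ : Submodule ℤ (EuclideanSpace ℝ (Fin n)))
    [DiscreteTopology Λ] [IsZLattice ℝ Λ]
    (f : EuclideanSpace ℝ (Fin n) → ℝ)
    (hcont : Continuous f) (hnonneg : ∀ x, 0 ≤ f x) (hint : Integrable f)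
    (hprob : ∫ x, f x = 1)
    (hdecay : ∃ C δ : ℝ, 0 < C ∧ 0 < δ ∧
      ∀ x : EuclideanSpace ℝ (Fin n), f x ≤ C * (1 + ‖x‖) ^ (-((n : ℝ) + δ)))
    (hsupp : ∀ t : EuclideanSpace ℝ (Fin n),
      t ∉ interior (voronoi (fourierDual (Λ : Set (EuclideanSpace ℝ (Fin n))))) →
        charFn f t = 0) :
    ∀ x : EuclideanSpace ℝ (Fin n),
      ∑' l : Λ, f ((l : EuclideanSpace ℝ (Fin n)) + x) = 1 / ZLattice.covolume Λ := by
  intro x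
  obtain ⟨C, δ, -, hδ, hbound⟩ := hdecay
  have hsum := stmt_14_general volume Λ (f := fun y ↦ (f y : ℂ)) (by fun_prop)
    (r := n + δ) (by simpa using hδ) (by simpa [abs_of_nonneg, hnonneg] using hbound)
    (fun L ↦ integral_mul_exp_eq_zero_of_charFn_eq_zero hsupp) x
  rw [integral_complex_ofReal, hprob] at hsum
  exact (Complex.hasSum_ofReal.mp (by exact_mod_cast hsum)).tsum_eq

end
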